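/- Let J be a g-function with log J in the Walters class W(Ω,σ). Then there exists exactly one Borel probability measure μ on Ω with L_{log J}^* μ = μ; this μ is σ-invariant and fully supported, the topological pressure satisfies P(log J)=0, μ is the unique equilibrium state of log J, and its Kolmogorov–Sinai entropy satisfies h_μ(σ) = −∫_Ω log J dμ > 0. -/

import Mathlib

open Real MeasureTheory Filter Topology Set

open scoped Classical

namespace GS

/-- The full shift space `Ω = 𝒜^ℕ`. -/
abbrev Omega (𝒜 : Type) : Type := ℕ → 𝒜

variable {𝒜 : Type}

/-- The left shift `σ(x₁,x₂,…) = (x₂,x₃,…)`. -/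
def shift (x : Omega 𝒜) : Omega 𝒜 := fun n => x (n + 1)

/-- Prepending a symbol: `qx = (q,x₁,x₂,…)`. -/
def cons (q : 𝒜) (x : Omega 𝒜) : Omega 𝒜 := fun n => Nat.casesOn n q x

/-- Concatenation `wx` of a finite word `w ∈ 𝒜^k` with `x ∈ Ω`. -/
def concat {k : ℕ} (w : Fin k → 𝒜) (x : Omega 𝒜) : Omega 𝒜 :=
  fun n => if h : n < k then w ⟨n, h⟩ else x (n - k)

/-- The metric `d(x,y) = 2^{-N(x,y)}`, `N(x,y) = inf{k ≥ 1 : x_k ≠ y_k}`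
(sequences are indexed from `0` in Lean, whence the `+ 1`). -/
noncomputable def dOmega (x y : Omega 𝒜) : ℝ :=
  if x = y then 0 else (1 / 2 : ℝ) ^ (sInf {k : ℕ | x k ≠ y k} + 1)

/-- `a : Ω → E` is `α`-Hölder (w.r.t. `dOmega`):
`Hol_α(a) = sup_{x≠y} ‖a x - a y‖ / d(x,y)^α < ∞`. -/
def IsHolderW (α : ℝ) {E : Type*} [NormedAddCommGroup E] (a : Omega 𝒜 → E) : Prop :=
  ∃ C : ℝ, ∀ x y : Omega 𝒜, ‖a x - a y‖ ≤ C * (dOmega x y) ^ α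

/-- The Hölder constant `Hol_α(a) = sup_{x≠y} ‖a x - a y‖ / d(x,y)^α`. -/
noncomputable def HolConst (α : ℝ) {E : Type*} [NormedAddCommGroup E] (a : Omega 𝒜 → E) : ℝ :=
  sSup {r : ℝ | ∃ x y : Omega 𝒜, x ≠ y ∧ r = ‖a x - a y‖ / (dOmega x y) ^ α}

/-- `J` is a `g`-function: continuous, strictly positive, with `∑_{q∈𝒜} J(qx) = 1`. -/
def IsGFunction [Fintype 𝒜] [TopologicalSpace 𝒜] (J : Omega 𝒜 → ℝ) : Prop :=
  Continuous J ∧ (∀ x, 0 < J x) ∧ ∀ x : Omega 𝒜, ∑ q : 𝒜, J (cons q x) = 1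

/-- The Ruelle transfer operator `(L_f φ)(x) = ∑_{q∈𝒜} e^{f(qx)} φ(qx)`. -/
noncomputable def ruelle [Fintype 𝒜] {E : Type*} [AddCommMonoid E] [Module ℝ E]
    (f : Omega 𝒜 → ℝ) (φ : Omega 𝒜 → E) : Omega 𝒜 → E :=
  fun x => ∑ q : 𝒜, Real.exp (f (cons q x)) • φ (cons q x)

/-- Birkhoff sum `S_k(f) = ∑_{j=0}^{k-1} f ∘ σ^j`. -/
def birkhoff (f : Omega 𝒜 → ℝ) (k : ℕ) (x : Omega 𝒜) : ℝ :=
  ∑ j ∈ Finset.range k, f (shift^[j] x)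

/-- `𝕁(wx) = exp (S_k(log J)(wx))` for a word `w` of length `k`. -/
noncomputable def JBirk (J : Omega 𝒜 → ℝ) (k : ℕ) (w : Fin k → 𝒜) (x : Omega 𝒜) : ℝ :=
  Real.exp (birkhoff (fun z => Real.log (J z)) k (concat w x))

/-- `ζ₊(s) = ∑_{k≥1} ∑_{w∈𝒜^k} a(wx) 𝕁(wx)^s`. -/
noncomputable def zetaPlus [Fintype 𝒜] (J : Omega 𝒜 → ℝ) (a : Omega 𝒜 → ℂ) (x : Omega 𝒜)
    (s : ℝ) : ℂ :=
  ∑' k : ℕ, ∑ w : Fin (k + 1) → 𝒜, a (concat w x) * (((JBirk J (k + 1) w x) ^ s : ℝ) : ℂ)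

/-- `ζ₋(s) = ∑_{k≥1} ∑_{w∈𝒜^k} a(wy) 𝕁(wx)^s`. -/
noncomputable def zetaMinus [Fintype 𝒜] (J : Omega 𝒜 → ℝ) (a : Omega 𝒜 → ℂ) (x y : Omega 𝒜)
    (s : ℝ) : ℂ :=
  ∑' k : ℕ, ∑ w : Fin (k + 1) → 𝒜, a (concat w y) * (((JBirk J (k + 1) w x) ^ s : ℝ) : ℂ)

/-- `L_{log J}^* μ = μ`, i.e. `μ` is a `g`-measure of `J`, tested against continuous functions. -/
def IsGMeasure [Fintype 𝒜] [TopologicalSpace 𝒜] [MeasurableSpace 𝒜]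
    (J : Omega 𝒜 → ℝ) (μ : Measure (Omega 𝒜)) : Prop :=
  IsProbabilityMeasure μ ∧
    ∀ φ : Omega 𝒜 → ℂ, Continuous φ →
      ∫ x, ruelle (fun z => Real.log (J z)) φ x ∂μ = ∫ x, φ x ∂μ

/-- The cylinder set determined by a finite word. -/
def cyl {k : ℕ} (w : Fin k → 𝒜) : Set (Omega 𝒜) := {x | ∀ i : Fin k, x (i : ℕ) = w i}

/-- Entropy of the partition into cylinders of length `n`. -/
noncomputable def blockEntropy [Fintype 𝒜] [MeasurableSpace 𝒜] (μ : Measure (Omega 𝒜))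
    (n : ℕ) : ℝ :=
  ∑ w : Fin n → 𝒜, Real.negMulLog (μ (cyl w)).toReal

/-- Kolmogorov–Sinai entropy `h_μ(σ)` of a shift-invariant measure, computed through the
generating partition into cylinders: `h_μ(σ) = lim_n H_n/n = inf_{n≥1} H_n/n`. -/
noncomputable def KSentropy [Fintype 𝒜] [MeasurableSpace 𝒜] (μ : Measure (Omega 𝒜)) : ℝ :=
  ⨅ n : ℕ, blockEntropy μ (n + 1) / (n + 1)

/-- Topological pressure `P(f) = sup {h_μ(σ) + ∫ f dμ}` over shift-invariant Borel
probability measures. -/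
noncomputable def pressure [Fintype 𝒜] [MeasurableSpace 𝒜] (f : Omega 𝒜 → ℝ) : ℝ :=
  sSup {r : ℝ | ∃ μ : Measure (Omega 𝒜), IsProbabilityMeasure μ ∧
    Measure.map shift μ = μ ∧ r = KSentropy μ + ∫ x, f x ∂μ}

/-- `μ` is an equilibrium state of `f`. -/
def IsEquilibrium [Fintype 𝒜] [MeasurableSpace 𝒜] (f : Omega 𝒜 → ℝ)
    (μ : Measure (Omega 𝒜)) : Prop :=
  IsProbabilityMeasure μ ∧ Measure.map shift μ = μ ∧
    KSentropy μ + ∫ x, f x ∂μ = pressure f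

/-- The Walters class `W(Ω,σ)`:
`sup_{n≥1} sup_{w∈𝒜^n} |S_n(f)(wx) − S_n(f)(wy)| → 0` as `d(x,y) → 0`. -/
def WaltersClass [TopologicalSpace 𝒜] (f : Omega 𝒜 → ℝ) : Prop :=
  Continuous f ∧ ∀ ε > (0:ℝ), ∃ δ > (0:ℝ), ∀ x y : Omega 𝒜, dOmega x y < δ →
    ∀ (n : ℕ) (w : Fin n → 𝒜),
      |birkhoff f n (concat w x) - birkhoff f n (concat w y)| ≤ ε

/-- The set `W*` of finite (nonempty) words over `𝒜`. -/
def Words (𝒜 : Type) : Type := Σ k : ℕ, Fin (k + 1) → 𝒜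

end GS

/-!
Write `f = log J`. A probability measure `μ` fixed by `L_f^*` exists by averaging an orbit of
`L_f^*`, it is shift-invariant because `J` is normalized, and it satisfies
`μ [w] = ∫ exp (S_n f (w x)) ∂μ(x)` on every cylinder `[w]` of length `n`. In the Walters class the
exponent varies by at most a constant `C` on `[w]`, independently of `n`. Hence for every invariant
`ν` the relative entropy of `ν` with respect to `μ` on words of length `n` is at most
`C - n (h_ν + ∫ f ∂ν)`. Being nonnegative, it forces `h_ν + ∫ f ∂ν ≤ 0`; and if equality holds it
stays bounded, which forces `ν ≪ μ`. Jensen's inequality on cylinders gives equality for `ν = μ`.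

All uniqueness claims follow from ergodicity of `μ`. If `B` is invariant with `μ B > 0`, then `μ`
conditioned on `B` is again fixed by `L_f^*`, so the invariant measure `μ` is absolutely continuous
with respect to it and `μ Bᶜ = 0`. An invariant probability measure that is absolutely continuous
with respect to an ergodic one coincides with it.
-/

namespace GS

section Words

variable {𝒜 : Type}

/-- The initial word of length `n` of a sequence, so that `cyl w = word n ⁻¹' {w}`. -/
def word (n : ℕ) (x : Omega 𝒜) : Fin n → 𝒜 := fun i => x i

lemma word_preimage_singleton {n : ℕ} (w : Fin n → 𝒜) : word n ⁻¹' {w} = cyl w := by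
  ext x
  exact funext_iff

lemma word_eq_word_iff {n : ℕ} {x y : Omega 𝒜} :
    word n x = word n y ↔ ∀ i < n, x i = y i := by
  simp [word, funext_iff, Fin.forall_iff]

lemma shift_iterate_apply (k : ℕ) (x : Omega 𝒜) (n : ℕ) : shift^[k] x n = x (n + k) := by
  induction k generalizing x with
  | zero => rfl
  | succ k ih => rw [Function.iterate_succ_apply, ih, shift, add_assoc]

lemma word_concat {n : ℕ} (w : Fin n → 𝒜) (x : Omega 𝒜) : word n (concat w x) = w := by
  ext i
  simp [word, concat]

lemma shift_iterate_concat {k : ℕ} (w : Fin k → 𝒜) (x : Omega 𝒜) :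
    shift^[k] (concat w x) = x := by
  ext n
  simp [shift_iterate_apply, concat]

lemma concat_word_shift_iterate (k : ℕ) (x : Omega 𝒜) :
    concat (word k x) (shift^[k] x) = x := by
  ext n
  by_cases h : n < k
  · simp [concat, word, h]
  · simp [concat, shift_iterate_apply, h, Nat.sub_add_cancel (not_lt.mp h)]

lemma word_shift_iterate_congr {k m : ℕ} {x y : Omega 𝒜} (h : word (k + m) x = word (k + m) y) :
    word m (shift^[k] x) = word m (shift^[k] y) := by
  rw [word_eq_word_iff] at h ⊢
  intro i hi
  rw [shift_iterate_apply, shift_iterate_apply]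
  exact h (i + k) (by omega)

lemma concat_zero (w : Fin 0 → 𝒜) (x : Omega 𝒜) : concat w x = x := by
  ext n
  simp [concat]

lemma concat_snoc {k : ℕ} (w : Fin k → 𝒜) (q : 𝒜) (x : Omega 𝒜) :
    concat (Fin.snoc (α := fun _ => 𝒜) w q) x = concat w (cons q x) := by
  ext n
  obtain h | rfl | h := lt_trichotomy n k
  · simp [concat, Fin.snoc, h, h.trans k.lt_succ_self]
  · simp [concat, Fin.snoc, cons]
  · obtain ⟨m, rfl⟩ := Nat.exists_eq_add_of_lt h
    have hm : k + m + 1 - k = m + 1 := by omega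
    simp [concat, cons, hm, show ¬ k + m + 1 < k by omega, show k + m + 1 - (k + 1) = m by omega]

lemma birkhoff_add (f : Omega 𝒜 → ℝ) (m n : ℕ) (x : Omega 𝒜) :
    birkhoff f (m + n) x = birkhoff f m x + birkhoff f n (shift^[m] x) :=
  birkhoffSum_add shift f m n x

lemma birkhoff_concat_snoc (f : Omega 𝒜 → ℝ) {n : ℕ} (w : Fin n → 𝒜) (q : 𝒜) (x : Omega 𝒜) :
    birkhoff f (n + 1) (concat (Fin.snoc (α := fun _ => 𝒜) w q) x)
      = birkhoff f n (concat w (cons q x)) + f (cons q x) := by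
  rw [concat_snoc, birkhoff_add, shift_iterate_concat]
  simp [birkhoff]

lemma abs_birkhoff_le {f : Omega 𝒜 → ℝ} {M : ℝ} (hM : ∀ x, |f x| ≤ M) (n : ℕ) (x : Omega 𝒜) :
    |birkhoff f n x| ≤ n * M :=
  calc |birkhoff f n x| ≤ ∑ j ∈ Finset.range n, |f (shift^[j] x)| := Finset.abs_sum_le_sum_abs _ _
    _ ≤ ∑ _j ∈ Finset.range n, M := Finset.sum_le_sum fun j _ => hM _
    _ = n * M := by simp

lemma monotone_word_preimage_cyl_subset (U : Set (Omega 𝒜)) :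
    Monotone fun n => word n ⁻¹' {w | cyl w ⊆ U} := fun _ _ hmn _ hx _ hy =>
  hx fun i => hy ⟨i, i.2.trans_le hmn⟩

end Words

section Topology

variable {𝒜 : Type} [TopologicalSpace 𝒜]

lemma continuous_word (n : ℕ) : Continuous (word n : Omega 𝒜 → Fin n → 𝒜) :=
  continuous_pi fun i => continuous_apply (i : ℕ)

lemma continuous_shift : Continuous (shift : Omega 𝒜 → Omega 𝒜) :=
  continuous_pi fun n => continuous_apply (n + 1)

lemma continuous_cons (q : 𝒜) : Continuous (cons q : Omega 𝒜 → Omega 𝒜) := by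
  refine continuous_pi fun n => ?_
  cases n with
  | zero => exact continuous_const
  | succ n => exact continuous_apply n

lemma continuous_concat {k : ℕ} (w : Fin k → 𝒜) :
    Continuous (concat w : Omega 𝒜 → Omega 𝒜) := by
  refine continuous_pi fun n => ?_
  by_cases h : n < k
  · simpa only [concat, h, dite_true] using continuous_const
  · simpa only [concat, h, dite_false] using continuous_apply (n - k)

lemma continuous_birkhoff {f : Omega 𝒜 → ℝ} (hf : Continuous f) (n : ℕ) :
    Continuous (birkhoff f n) :=
  continuous_finsetSum _ fun j _ => hf.comp (continuous_shift.iterate j)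

lemma continuous_birkhoff_concat {f : Omega 𝒜 → ℝ} (hf : Continuous f) {n : ℕ}
    (w : Fin n → 𝒜) : Continuous fun x => birkhoff f n (concat w x) :=
  (continuous_birkhoff hf n).comp (continuous_concat w)

variable [DiscreteTopology 𝒜]

lemma isClopen_cyl {k : ℕ} (w : Fin k → 𝒜) : IsClopen (cyl w) := by
  rw [← word_preimage_singleton]
  exact (isClopen_discrete {w}).preimage (continuous_word k)

lemma exists_cyl_subset {U : Set (Omega 𝒜)} (hU : IsOpen U) {x : Omega 𝒜} (hx : x ∈ U) :
    ∃ n, cyl (word n x) ⊆ U := by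
  obtain ⟨_, ⟨y, n, rfl⟩, hxy, hyU⟩ :=
    (PiNat.isTopologicalBasis_cylinders fun _ : ℕ => 𝒜).exists_subset_of_mem_open hx hU
  refine ⟨n, fun z hz => hyU fun i hi => ?_⟩
  exact (hz ⟨i, hi⟩).trans (hxy i hi)

lemma iUnion_word_preimage_cyl_subset {U : Set (Omega 𝒜)} (hU : IsOpen U) :
    ⋃ n, word n ⁻¹' {w | cyl w ⊆ U} = U := by
  ext x
  simp only [mem_iUnion, mem_preimage, mem_ofPred_eq]
  exact ⟨fun ⟨n, hn⟩ => hn fun i => rfl, exists_cyl_subset hU⟩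

end Topology

section Measurability

variable {𝒜 : Type} [MeasurableSpace 𝒜]

lemma measurable_word (n : ℕ) : Measurable (word n : Omega 𝒜 → Fin n → 𝒜) :=
  measurable_pi_lambda _ fun i => measurable_pi_apply (i : ℕ)

lemma measurable_shift : Measurable (shift : Omega 𝒜 → Omega 𝒜) :=
  measurable_pi_lambda _ fun n => measurable_pi_apply (n + 1)

lemma measurable_cons (q : 𝒜) : Measurable (cons q : Omega 𝒜 → Omega 𝒜) := by
  refine measurable_pi_lambda _ fun n => ?_
  cases n with
  | zero => exact measurable_const
  | succ n => exact measurable_pi_apply n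

variable {ν : Measure (Omega 𝒜)}

lemma integral_birkhoff {f : Omega 𝒜 → ℝ} (hν : MeasurePreserving shift ν ν)
    (hf : Integrable f ν) (n : ℕ) : ∫ x, birkhoff f n x ∂ν = n * ∫ x, f x ∂ν := by
  have hint (j : ℕ) : Integrable (fun x => f (shift^[j] x)) ν :=
    (hν.iterate j).integrable_comp_of_integrable hf
  have heq (j : ℕ) : ∫ x, f (shift^[j] x) ∂ν = ∫ x, f x ∂ν := by
    conv_rhs => rw [← (hν.iterate j).map_eq]
    exact (integral_map (hν.iterate j).aemeasurable
      ((hν.iterate j).map_eq.symm ▸ hf.aestronglyMeasurable)).symm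
  unfold birkhoff
  rw [integral_finsetSum _ fun j _ => hint j]
  simp [heq]

lemma measureReal_word_preimage [MeasurableSingletonClass 𝒜] [IsFiniteMeasure ν] {n : ℕ}
    (A : Finset (Fin n → 𝒜)) :
    ν.real (word n ⁻¹' A) = ∑ w ∈ A, ν.real (cyl w) := by
  simp only [← word_preimage_singleton]
  exact (sum_measureReal_preimage_singleton A fun w _ =>
    measurable_word n (measurableSet_singleton w)).symm

lemma integrable_comp_word [Finite 𝒜] [MeasurableSingletonClass 𝒜] [IsFiniteMeasure ν] {n : ℕ}
    (g : (Fin n → 𝒜) → ℝ) : Integrable (fun x => g (word n x)) ν :=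
  Integrable.of_finite.comp_measurable (measurable_word n)

end Measurability

section Distortion

variable {𝒜 : Type}

/-- Bowen's condition: Birkhoff sums of order `n` vary by at most `C` on each cylinder of length
`n`. -/
def HasBoundedDistortion (f : Omega 𝒜 → ℝ) (C : ℝ) : Prop :=
  ∀ (n : ℕ) (x y : Omega 𝒜), word n x = word n y → birkhoff f n x - birkhoff f n y ≤ C

lemma dOmega_le_of_word_eq {m : ℕ} {x y : Omega 𝒜} (h : word m x = word m y) :
    dOmega x y ≤ (1 / 2) ^ m := by
  rw [dOmega]
  split_ifs with hxy
  · positivity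
  have hne : {k | x k ≠ y k}.Nonempty := Function.ne_iff.mp hxy
  have hm : m ≤ sInf {k | x k ≠ y k} :=
    le_csInf hne fun k hk => not_lt.mp fun hkm => hk (word_eq_word_iff.mp h k hkm)
  exact pow_le_pow_of_le_one (by norm_num) (by norm_num) (by omega)

/-- Split `S_n = S_{n-m} + S_m ∘ σ^{n-m}`: the Walters condition controls the first term once `m`
coordinates agree after it, and boundedness of `f` controls the second. -/
theorem WaltersClass.exists_hasBoundedDistortion [Finite 𝒜] [TopologicalSpace 𝒜]
    {f : Omega 𝒜 → ℝ} (hf : WaltersClass f) : ∃ C, HasBoundedDistortion f C := by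
  obtain ⟨M, hM⟩ := isCompact_univ.exists_bound_of_continuousOn hf.1.continuousOn
  replace hM x : |f x| ≤ M := hM x (mem_univ x)
  obtain ⟨δ, hδ, hfδ⟩ := hf.2 1 one_pos
  obtain ⟨m, hm⟩ := exists_pow_lt_of_lt_one hδ (by norm_num : (1 / 2 : ℝ) < 1)
  refine ⟨1 + 2 * (m * M), fun n x y hxy => ?_⟩
  have hM_nonneg : 0 ≤ M := (abs_nonneg _).trans (hM x)
  obtain hnm | hmn := le_total n m
  · have hx := abs_le.mp (abs_birkhoff_le hM n x)
    have hy := abs_le.mp (abs_birkhoff_le hM n y)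
    have hle : (n : ℝ) * M ≤ m * M := by gcongr
    linarith
  · obtain ⟨k, rfl⟩ := Nat.exists_eq_add_of_le' hmn
    have hhead : birkhoff f k x - birkhoff f k y ≤ 1 := by
      have hd := (dOmega_le_of_word_eq (word_shift_iterate_congr hxy)).trans_lt hm
      have hkw : word k x = word k y :=
        word_eq_word_iff.mpr fun i hi => word_eq_word_iff.mp hxy i (by omega)
      have habs := hfδ _ _ hd k (word k x)
      rw [concat_word_shift_iterate, hkw, concat_word_shift_iterate] at habs
      exact (abs_le.mp habs).2
    have hx := abs_le.mp (abs_birkhoff_le hM m (shift^[k] x))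
    have hy := abs_le.mp (abs_birkhoff_le hM m (shift^[k] y))
    rw [birkhoff_add, birkhoff_add]
    linarith

end Distortion

section Ruelle

variable {𝒜 : Type} [Fintype 𝒜]

/-- A potential is normalized if its transfer operator fixes the constant `1`; these are the
logarithms of `g`-functions. -/
def IsNormalized (f : Omega 𝒜 → ℝ) : Prop :=
  ∀ x, ∑ q : 𝒜, exp (f (cons q x)) = 1

lemma IsGFunction.continuous_log [TopologicalSpace 𝒜] {J : Omega 𝒜 → ℝ} (hJ : IsGFunction J) :
    Continuous fun z => log (J z) :=
  hJ.1.log fun x => (hJ.2.1 x).ne'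

lemma IsGFunction.isNormalized_log [TopologicalSpace 𝒜] {J : Omega 𝒜 → ℝ} (hJ : IsGFunction J) :
    IsNormalized fun z => log (J z) := fun x => by
  simpa only [exp_log (hJ.2.1 _)] using hJ.2.2 x

/-- With a second symbol available, `exp ∘ f` has another positive summand to share `1` with. -/
lemma IsNormalized.neg [Nontrivial 𝒜] {f : Omega 𝒜 → ℝ} (hf : IsNormalized f) (x : Omega 𝒜) :
    f x < 0 := by
  obtain ⟨q, hq⟩ := exists_ne (x 0)
  have hx : cons (x 0) (shift x) = x := by
    ext n
    cases n <;> rfl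
  have hsum := Finset.add_le_sum (f := fun p => exp (f (cons p (shift x))))
    (fun p _ => (exp_pos _).le) (Finset.mem_univ (x 0)) (Finset.mem_univ q) hq.symm
  rw [hf (shift x), hx] at hsum
  exact exp_lt_one_iff.mp (by linarith [exp_pos (f (cons q (shift x)))])

variable {f : Omega 𝒜 → ℝ}

lemma ruelle_iterate_apply (f φ : Omega 𝒜 → ℝ) (n : ℕ) (x : Omega 𝒜) :
    (ruelle f)^[n] φ x =
      ∑ w : Fin n → 𝒜, exp (birkhoff f n (concat w x)) * φ (concat w x) := by
  induction n generalizing x with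
  | zero => simp [birkhoff, concat_zero]
  | succ n ih =>
    rw [Function.iterate_succ_apply', ← (Fin.snocEquiv fun _ => 𝒜).sum_comp,
      Fintype.sum_prod_type]
    simp only [ruelle, ih, smul_eq_mul, Finset.mul_sum]
    refine Finset.sum_congr rfl fun q _ => Finset.sum_congr rfl fun w _ => ?_
    have hqw : Fin.snocEquiv (fun _ => 𝒜) (q, w) = Fin.snoc (α := fun _ => 𝒜) w q := rfl
    rw [hqw, birkhoff_concat_snoc, concat_snoc, exp_add]
    ring

lemma ruelle_iterate_indicator_cyl (f : Omega 𝒜 → ℝ) {n : ℕ} (w : Fin n → 𝒜) (x : Omega 𝒜) :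
    (ruelle f)^[n] ((cyl w).indicator 1) x = exp (birkhoff f n (concat w x)) := by
  rw [ruelle_iterate_apply, Finset.sum_eq_single w]
  · simp [← word_preimage_singleton, word_concat]
  · intro v _ hv
    simp [← word_preimage_singleton, word_concat, hv]
  · simp

lemma continuous_ruelle [TopologicalSpace 𝒜] {E : Type*} [AddCommMonoid E] [Module ℝ E]
    [TopologicalSpace E] [ContinuousAdd E] [ContinuousSMul ℝ E] (hf : Continuous f)
    {φ : Omega 𝒜 → E} (hφ : Continuous φ) : Continuous (ruelle f φ) :=
  continuous_finsetSum _ fun q _ =>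
    (hf.comp (continuous_cons q)).rexp.smul (hφ.comp (continuous_cons q))

lemma continuous_ruelle_iterate [TopologicalSpace 𝒜] {E : Type*} [AddCommMonoid E] [Module ℝ E]
    [TopologicalSpace E] [ContinuousAdd E] [ContinuousSMul ℝ E] (hf : Continuous f)
    {φ : Omega 𝒜 → E} (hφ : Continuous φ) (n : ℕ) : Continuous ((ruelle f)^[n] φ) := by
  induction n with
  | zero => exact hφ
  | succ n ih => rw [Function.iterate_succ_apply']; exact continuous_ruelle hf ih

end Ruelle

section DualRuelle

variable {𝒜 : Type} [Fintype 𝒜] [MeasurableSpace 𝒜]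

/-- The dual `L_f^*` of the transfer operator on measures: `L_f^* μ` has density `exp ∘ f` with
respect to the sum of the push-forwards of `μ` under the inverse branches of the shift. -/
noncomputable def dualRuelle (f : Omega 𝒜 → ℝ) (μ : Measure (Omega 𝒜)) : Measure (Omega 𝒜) :=
  (∑ q : 𝒜, μ.map (cons q)).withDensity fun x => ENNReal.ofReal (exp (f x))

variable {f : Omega 𝒜 → ℝ} {μ : Measure (Omega 𝒜)}

lemma dualRuelle_smul (c : ENNReal) : dualRuelle f (c • μ) = c • dualRuelle f μ := by
  simp only [dualRuelle, Measure.map_smul, ← Finset.smul_sum, withDensity_smul_measure]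

lemma dualRuelle_restrict {B : Set (Omega 𝒜)} (hB : MeasurableSet B) :
    dualRuelle f (μ.restrict B) = (dualRuelle f μ).restrict (shift ⁻¹' B) := by
  have hmap (q : 𝒜) :
      (μ.map (cons q)).restrict (shift ⁻¹' B) = (μ.restrict B).map (cons q) :=
    Measure.restrict_map (measurable_cons q) (measurable_shift hB)
  rw [dualRuelle, dualRuelle, restrict_withDensity (measurable_shift hB)]
  congr 1
  refine Measure.ext fun s hs => ?_
  simp [← hmap, Measure.restrict_apply hs]

lemma dualRuelle_univ (hf : Measurable f) (hf1 : IsNormalized f) :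
    dualRuelle f μ univ = μ univ := by
  have hexp : Measurable fun x => ENNReal.ofReal (exp (f x)) := hf.exp.ennreal_ofReal
  have hsum (x : Omega 𝒜) : ∑ q : 𝒜, ENNReal.ofReal (exp (f (cons q x))) = 1 := by
    rw [← ENNReal.ofReal_sum_of_nonneg fun q _ => (exp_pos _).le, hf1 x, ENNReal.ofReal_one]
  rw [dualRuelle, withDensity_apply _ .univ, setLIntegral_univ, lintegral_finsetSum_measure]
  simp only [lintegral_map hexp (measurable_cons _)]
  rw [← lintegral_finsetSum (f := fun q x => ENNReal.ofReal (exp (f (cons q x)))) _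
    fun q _ => hexp.comp (measurable_cons q)]
  simp [hsum]

lemma isProbabilityMeasure_dualRuelle [IsProbabilityMeasure μ] (hf : Measurable f)
    (hf1 : IsNormalized f) : IsProbabilityMeasure (dualRuelle f μ) :=
  ⟨by rw [dualRuelle_univ hf hf1, measure_univ]⟩

lemma map_shift_dualRuelle (hf : Measurable f) (hf1 : IsNormalized f) :
    (dualRuelle f μ).map shift = μ := by
  ext B hB
  rw [Measure.map_apply measurable_shift hB, ← Measure.restrict_apply_univ,
    ← dualRuelle_restrict hB, dualRuelle_univ hf hf1, Measure.restrict_apply_univ]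

lemma measurePreserving_shift_of_dualRuelle_eq (hf : Measurable f) (hf1 : IsNormalized f)
    (hμ : dualRuelle f μ = μ) : MeasurePreserving shift μ μ :=
  ⟨measurable_shift, by conv_lhs => rw [← hμ, map_shift_dualRuelle hf hf1]⟩

end DualRuelle

section FixedPoint

lemma integrable_of_continuous {X E : Type*} [TopologicalSpace X] [CompactSpace X]
    [MeasurableSpace X] [OpensMeasurableSpace X] [NormedAddCommGroup E]
    [SecondCountableTopologyEither X E] {μ : Measure X} [IsFiniteMeasure μ] {φ : X → E}
    (hφ : Continuous φ) : Integrable φ μ :=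
  hφ.integrable_of_hasCompactSupport (HasCompactSupport.of_compactSpace φ)

lemma isProbabilityMeasure_birkhoffAverage {X : Type*} [MeasurableSpace X]
    {D : Measure X → Measure X} {μ : Measure X} (horbit : ∀ k, IsProbabilityMeasure (D^[k] μ))
    (n : ℕ) : IsProbabilityMeasure (birkhoffAverage NNReal D id (n + 1) μ) := by
  constructor
  have hne : ((n : NNReal) + 1) ≠ 0 := by positivity
  simp [birkhoffAverage, birkhoffSum, Measure.finsetSum_apply, ENNReal.smul_def,
    ENNReal.coe_inv hne, ENNReal.inv_mul_cancel]

lemma integral_birkhoffAverage {X : Type*} [TopologicalSpace X] [CompactSpace X]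
    [MeasurableSpace X] [OpensMeasurableSpace X] {D : Measure X → Measure X} {μ : Measure X}
    (horbit : ∀ k, IsProbabilityMeasure (D^[k] μ)) {φ : X → ℝ} (hφ : Continuous φ) (n : ℕ) :
    ∫ x, φ x ∂birkhoffAverage NNReal D id n μ =
      birkhoffAverage ℝ D (fun ρ => ∫ x, φ x ∂ρ) n μ := by
  simp only [birkhoffAverage, birkhoffSum, id]
  rw [integral_smul_nnreal_measure,
    integral_finsetSum_measure fun k _ => integrable_of_continuous hφ]
  simp [NNReal.smul_def]

/-- Krylov–Bogolyubov: a weak limit of the averages of the orbit of any initial probability measure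
is fixed. -/
theorem exists_isProbabilityMeasure_fixed {X : Type*} [TopologicalSpace X] [CompactSpace X]
    [T2Space X] [Nonempty X] [MeasurableSpace X] [BorelSpace X] [HasOuterApproxClosed X]
    (D : Measure X → Measure X)
    (hD : ∀ μ, IsProbabilityMeasure μ → IsProbabilityMeasure (D μ))
    (hdual : ∀ φ : X → ℝ, Continuous φ → ∃ ψ : X → ℝ, Continuous ψ ∧
      ∀ μ, IsProbabilityMeasure μ → ∫ x, φ x ∂D μ = ∫ x, ψ x ∂μ) :
    ∃ μ, IsProbabilityMeasure μ ∧ D μ = μ := by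
  let μ₀ : Measure X := Measure.dirac (Classical.arbitrary X)
  have horbit (k : ℕ) : IsProbabilityMeasure (D^[k] μ₀) := by
    induction k with
    | zero => exact Measure.dirac.isProbabilityMeasure
    | succ k ih => rw [Function.iterate_succ_apply']; exact hD _ ih
  let ν (n : ℕ) : ProbabilityMeasure X :=
    ⟨birkhoffAverage NNReal D id (n + 1) μ₀, isProbabilityMeasure_birkhoffAverage horbit n⟩
  obtain ⟨μ, hμ⟩ : ∃ μ, Tendsto ν (hyperfilter ℕ) (𝓝 μ) :=
    ⟨_, ((hyperfilter ℕ).map ν).le_nhds_lim⟩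
  have hlim {φ : X → ℝ} (hφ : Continuous φ) :
      Tendsto (fun n => birkhoffAverage ℝ D (fun ρ => ∫ x, φ x ∂ρ) (n + 1) μ₀) (hyperfilter ℕ)
        (𝓝 (∫ x, φ x ∂μ)) := by
    have := ProbabilityMeasure.tendsto_iff_forall_integral_tendsto.mp hμ
      (BoundedContinuousFunction.mkOfCompact ⟨φ, hφ⟩)
    simpa [ν, integral_birkhoffAverage horbit hφ] using this
  have hDμ := hD μ inferInstance
  refine ⟨μ, inferInstance, ext_of_forall_integral_eq_of_IsFiniteMeasure fun φ => ?_⟩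
  obtain ⟨ψ, hψ, hφψ⟩ := hdual φ φ.continuous
  have hshift (n : ℕ) : birkhoffAverage ℝ D (fun ρ => ∫ x, ψ x ∂ρ) n μ₀ =
      birkhoffAverage ℝ D (fun ρ => ∫ x, φ x ∂ρ) n (D μ₀) := by
    simp only [birkhoffAverage, birkhoffSum, ← Function.iterate_succ_apply,
      Function.iterate_succ_apply', hφψ _ (horbit _)]
  have hbdd : Bornology.IsBounded (range fun k => ∫ x, φ x ∂D^[k] μ₀) :=
    isBounded_iff_forall_norm_le.mpr ⟨‖φ‖, forall_mem_range.mpr fun k =>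
      φ.norm_integral_le_norm _⟩
  have hdiff := (tendsto_birkhoffAverage_apply_sub_birkhoffAverage (f := D)
    (g := fun ρ => ∫ x, φ x ∂ρ) ℝ hbdd).comp (tendsto_add_atTop_nat 1)
  have := tendsto_nhds_unique ((hlim hψ).sub (hlim φ.continuous))
    ((hdiff.mono_left Nat.hyperfilter_le_atTop).congr fun n => by simp [hshift])
  rw [hφψ μ inferInstance, sub_eq_zero.mp this]

end FixedPoint

section ConformalMeasures

variable {𝒜 : Type} [Fintype 𝒜] [TopologicalSpace 𝒜] [DiscreteTopology 𝒜] [MeasurableSpace 𝒜]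
  [BorelSpace 𝒜]

variable {f : Omega 𝒜 → ℝ} {μ : Measure (Omega 𝒜)}

lemma integral_dualRuelle [IsFiniteMeasure μ] {E : Type*} [NormedAddCommGroup E]
    [NormedSpace ℝ E] (hf : Continuous f) {φ : Omega 𝒜 → E} (hφ : Continuous φ) :
    ∫ x, φ x ∂dualRuelle f μ = ∫ x, ruelle f φ x ∂μ := by
  have hcont : Continuous fun x => exp (f x) • φ x := hf.rexp.smul hφ
  have hmeas : Measurable fun x => ENNReal.ofReal (exp (f x)) :=
    hf.measurable.exp.ennreal_ofReal
  rw [dualRuelle, integral_withDensity_eq_integral_toReal_smul hmeas (by simp)]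
  simp only [ENNReal.toReal_ofReal (exp_pos _).le]
  rw [integral_finsetSum_measure fun q _ => integrable_of_continuous hcont]
  unfold ruelle
  rw [integral_finsetSum (f := fun q x => exp (f (cons q x)) • φ (cons q x)) _
    fun q _ => integrable_of_continuous (hcont.comp (continuous_cons q))]
  refine Finset.sum_congr rfl fun q _ => ?_
  rw [integral_map (measurable_cons q).aemeasurable hcont.aestronglyMeasurable]

theorem exists_dualRuelle_eq [Nonempty 𝒜] (hf : Continuous f) (hf1 : IsNormalized f) :
    ∃ μ, IsProbabilityMeasure μ ∧ dualRuelle f μ = μ := by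
  refine exists_isProbabilityMeasure_fixed (dualRuelle f)
    (fun μ hμ => isProbabilityMeasure_dualRuelle hf.measurable hf1) fun φ hφ => ?_
  exact ⟨ruelle f φ, continuous_ruelle hf hφ, fun μ hμ => integral_dualRuelle hf hφ⟩

theorem isGMeasure_iff {J : Omega 𝒜 → ℝ} (hJ : IsGFunction J) :
    IsGMeasure J μ ↔ IsProbabilityMeasure μ ∧ dualRuelle (fun z => log (J z)) μ = μ := by
  have hf := hJ.continuous_log
  refine and_congr_right fun hμ => ⟨fun h => ?_, fun h φ hφ => ?_⟩
  · have := isProbabilityMeasure_dualRuelle (μ := μ) hf.measurable hJ.isNormalized_log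
    refine ext_of_forall_integral_eq_of_IsFiniteMeasure fun φ => ?_
    have hφ : Continuous fun x => (φ x : ℂ) := Complex.continuous_ofReal.comp φ.continuous
    have hint := (integral_dualRuelle hf hφ).trans (h _ hφ)
    simpa only [integral_complex_ofReal, Complex.ofReal_inj] using hint
  · rw [← integral_dualRuelle hf hφ, h]

lemma integral_ruelle_iterate [IsFiniteMeasure μ] (hf : Continuous f) (hμ : dualRuelle f μ = μ)
    {φ : Omega 𝒜 → ℝ} (hφ : Continuous φ) (n : ℕ) :
    ∫ x, (ruelle f)^[n] φ x ∂μ = ∫ x, φ x ∂μ := by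
  induction n with
  | zero => rfl
  | succ n ih =>
    rw [Function.iterate_succ_apply', ← integral_dualRuelle hf (continuous_ruelle_iterate hf hφ n),
      hμ, ih]

lemma measureReal_cyl [IsFiniteMeasure μ] (hf : Continuous f) (hμ : dualRuelle f μ = μ) {n : ℕ}
    (w : Fin n → 𝒜) : μ.real (cyl w) = ∫ x, exp (birkhoff f n (concat w x)) ∂μ := by
  have hcont : Continuous ((cyl w).indicator (1 : Omega 𝒜 → ℝ)) :=
    continuous_one.indicator (by simp [(isClopen_cyl w).frontier_eq])
  rw [← integral_indicator_one (isClopen_cyl w).isOpen.measurableSet,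
    ← integral_ruelle_iterate hf hμ hcont n]
  simp only [ruelle_iterate_indicator_cyl]

lemma measureReal_cyl_pos [IsProbabilityMeasure μ] (hf : Continuous f) (hμ : dualRuelle f μ = μ)
    {n : ℕ} (w : Fin n → 𝒜) : 0 < μ.real (cyl w) := by
  rw [measureReal_cyl hf hμ]
  exact integral_exp_pos (integrable_of_continuous (continuous_birkhoff_concat hf w).rexp)

theorem measure_pos_of_isOpen [IsProbabilityMeasure μ] (hf : Continuous f)
    (hμ : dualRuelle f μ = μ) {U : Set (Omega 𝒜)} (hU : IsOpen U) (hne : U.Nonempty) :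
    0 < μ U := by
  obtain ⟨x, hx⟩ := hne
  obtain ⟨n, hn⟩ := exists_cyl_subset hU hx
  exact (ENNReal.toReal_pos_iff.mp (measureReal_cyl_pos hf hμ _)).1.trans_le (measure_mono hn)

variable {C : ℝ}

lemma birkhoff_le_log_measureReal_cyl [IsProbabilityMeasure μ] (hf : Continuous f)
    (hμ : dualRuelle f μ = μ) (hC : HasBoundedDistortion f C) (n : ℕ) (x : Omega 𝒜) :
    birkhoff f n x ≤ log (μ.real (cyl (word n x))) + C := by
  have hle : exp (birkhoff f n x - C) ≤ μ.real (cyl (word n x)) := by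
    rw [measureReal_cyl hf hμ]
    calc exp (birkhoff f n x - C) = ∫ _, exp (birkhoff f n x - C) ∂μ := by simp
      _ ≤ _ := by
        refine integral_mono (integrable_const _)
          (integrable_of_continuous (continuous_birkhoff_concat hf _).rexp) fun y => ?_
        have := hC n x (concat (word n x) y) (word_concat _ y).symm
        exact exp_le_exp.mpr (by linarith)
  linarith [(le_log_iff_exp_le (measureReal_cyl_pos hf hμ _)).mpr hle]

end ConformalMeasures

section BlockEntropy

lemma negMulLog_add_mul_log_le {p q : ℝ} (hp : 0 ≤ p) (hq : 0 < q) :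
    negMulLog p + p * log q ≤ q - p := by
  obtain rfl | hp := hp.eq_or_lt
  · simpa using hq.le
  calc negMulLog p + p * log q = p * log (q / p) := by
        rw [log_div hq.ne' hp.ne', negMulLog]; ring
    _ ≤ p * (q / p - 1) := by gcongr; exact log_le_sub_one_of_pos (by positivity)
    _ = q - p := by field_simp

variable {𝒜 : Type} [Fintype 𝒜] [MeasurableSpace 𝒜] {ν : Measure (Omega 𝒜)}

variable [IsProbabilityMeasure ν]

lemma blockEntropy_nonneg (n : ℕ) : 0 ≤ blockEntropy ν n :=
  Finset.sum_nonneg fun _ _ => negMulLog_nonneg measureReal_nonneg measureReal_le_one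

lemma mul_KSentropy_le_blockEntropy (n : ℕ) : n * KSentropy ν ≤ blockEntropy ν n := by
  obtain _ | n := n
  · simpa using blockEntropy_nonneg 0
  have hbdd : BddBelow (range fun n : ℕ => blockEntropy ν (n + 1) / (n + 1)) :=
    ⟨0, forall_mem_range.mpr fun n => div_nonneg (blockEntropy_nonneg _) (by positivity)⟩
  have hle : KSentropy ν ≤ blockEntropy ν (n + 1) / (n + 1) := ciInf_le hbdd n
  rw [le_div_iff₀ (by positivity)] at hle
  push_cast
  linarith

variable [MeasurableSingletonClass 𝒜]

lemma integral_comp_word {n : ℕ} (g : (Fin n → 𝒜) → ℝ) :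
    ∫ x, g (word n x) ∂ν = ∑ w, ν.real (cyl w) * g w := by
  rw [← integral_map (measurable_word n).aemeasurable (by fun_prop),
    integral_fintype .of_finite]
  refine Finset.sum_congr rfl fun w _ => ?_
  rw [map_measureReal_apply (measurable_word n) (measurableSet_singleton w),
    word_preimage_singleton, smul_eq_mul]

lemma sum_measureReal_cyl (n : ℕ) : ∑ w : Fin n → 𝒜, ν.real (cyl w) = 1 := by
  rw [← measureReal_word_preimage]
  simp

end BlockEntropy

section Variational

variable {𝒜 : Type} [Fintype 𝒜] [TopologicalSpace 𝒜] [DiscreteTopology 𝒜] [MeasurableSpace 𝒜]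
  [BorelSpace 𝒜] {f : Omega 𝒜 → ℝ} {C : ℝ} {μ ν : Measure (Omega 𝒜)}
  [IsProbabilityMeasure μ] [IsProbabilityMeasure ν]

lemma mul_integral_le_sum_log_cyl (hf : Continuous f) (hC : HasBoundedDistortion f C)
    (hμ : dualRuelle f μ = μ) (hν : MeasurePreserving shift ν ν) (n : ℕ) :
    n * ∫ x, f x ∂ν ≤ ∑ w : Fin n → 𝒜, ν.real (cyl w) * log (μ.real (cyl w)) + C := by
  calc n * ∫ x, f x ∂ν = ∫ x, birkhoff f n x ∂ν :=
        (integral_birkhoff hν (integrable_of_continuous hf) n).symm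
    _ ≤ ∫ x, (log (μ.real (cyl (word n x))) + C) ∂ν :=
        integral_mono (integrable_of_continuous (continuous_birkhoff hf n))
          (integrable_comp_word fun w => log (μ.real (cyl w)) + C)
          (birkhoff_le_log_measureReal_cyl hf hμ hC n)
    _ = ∑ w : Fin n → 𝒜, ν.real (cyl w) * (log (μ.real (cyl w)) + C) :=
        integral_comp_word fun w => log (μ.real (cyl w)) + C
    _ = _ := by
        simp only [mul_add, Finset.sum_add_distrib, ← Finset.sum_mul, sum_measureReal_cyl, one_mul]

/-- The sum on the right is minus the relative entropy of `ν` with respect to `μ` on words of length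
`n`. -/
lemma mul_KSentropy_add_integral_le (hf : Continuous f) (hC : HasBoundedDistortion f C)
    (hμ : dualRuelle f μ = μ) (hν : MeasurePreserving shift ν ν) (n : ℕ) :
    n * (KSentropy ν + ∫ x, f x ∂ν) ≤ (∑ w : Fin n → 𝒜,
      (negMulLog (ν.real (cyl w)) + ν.real (cyl w) * log (μ.real (cyl w)))) + C := by
  have hentropy : n * KSentropy ν ≤ ∑ w : Fin n → 𝒜, negMulLog (ν.real (cyl w)) :=
    mul_KSentropy_le_blockEntropy n
  have hintegral := mul_integral_le_sum_log_cyl hf hC hμ hν n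
  rw [Finset.sum_add_distrib]
  linarith

theorem KSentropy_add_integral_nonpos (hf : Continuous f) (hC : HasBoundedDistortion f C)
    (hμ : dualRuelle f μ = μ) (hν : MeasurePreserving shift ν ν) :
    KSentropy ν + ∫ x, f x ∂ν ≤ 0 := by
  have hle (n : ℕ) : n * (KSentropy ν + ∫ x, f x ∂ν) ≤ C := by
    have hgibbs : ∑ w : Fin n → 𝒜,
        (negMulLog (ν.real (cyl w)) + ν.real (cyl w) * log (μ.real (cyl w))) ≤ 0 :=
      calc _ ≤ ∑ w : Fin n → 𝒜, (μ.real (cyl w) - ν.real (cyl w)) :=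
            Finset.sum_le_sum fun w _ =>
              negMulLog_add_mul_log_le measureReal_nonneg (measureReal_cyl_pos hf hμ w)
        _ = 0 := by rw [Finset.sum_sub_distrib, sum_measureReal_cyl, sum_measureReal_cyl, sub_self]
    linarith [mul_KSentropy_add_integral_le hf hC hμ hν n]
  by_contra! hpos
  obtain ⟨n, hn⟩ := exists_nat_gt (C / (KSentropy ν + ∫ x, f x ∂ν))
  rw [div_lt_iff₀ hpos] at hn
  exact hn.not_ge (hle n)

/-- Jensen's inequality for the concave function `negMulLog`, applied on each cylinder to
`measureReal_cyl`. -/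
lemma neg_integral_birkhoff_le_blockEntropy (hf : Continuous f)
    (hμ : dualRuelle f μ = μ) (n : ℕ) :
    -∫ x, birkhoff f n x ∂μ ≤ blockEntropy μ n := by
  have hint (w : Fin n → 𝒜) : Integrable (fun x =>
      exp (birkhoff f n (concat w x)) * birkhoff f n (concat w x)) μ :=
    integrable_of_continuous ((continuous_birkhoff_concat hf w).rexp.mul
      (continuous_birkhoff_concat hf w))
  have hjensen (w : Fin n → 𝒜) :
      -∫ x, exp (birkhoff f n (concat w x)) * birkhoff f n (concat w x) ∂μ ≤
        negMulLog (μ.real (cyl w)) := by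
    have hexp := (continuous_birkhoff_concat hf w).rexp
    have := concaveOn_negMulLog.le_map_integral (μ := μ) continuous_negMulLog.continuousOn
      isClosed_Ici (.of_forall fun x => (exp_pos (birkhoff f n (concat w x))).le)
      (integrable_of_continuous hexp) (integrable_of_continuous (continuous_negMulLog.comp hexp))
    rw [measureReal_cyl hf hμ]
    simpa only [Function.comp_def, negMulLog, log_exp, neg_mul, integral_neg] using this
  calc -∫ x, birkhoff f n x ∂μ
      = ∑ w : Fin n → 𝒜, -∫ x, exp (birkhoff f n (concat w x)) * birkhoff f n (concat w x) ∂μ := by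
        rw [← integral_ruelle_iterate hf hμ (continuous_birkhoff hf n) n]
        simp only [ruelle_iterate_apply]
        rw [integral_finsetSum _ fun w _ => hint w, Finset.sum_neg_distrib]
    _ ≤ blockEntropy μ n := Finset.sum_le_sum fun w _ => hjensen w

theorem KSentropy_add_integral_nonneg (hf : Continuous f) (hμ : dualRuelle f μ = μ)
    (hinv : MeasurePreserving shift μ μ) : 0 ≤ KSentropy μ + ∫ x, f x ∂μ := by
  suffices -∫ x, f x ∂μ ≤ KSentropy μ by linarith
  refine le_ciInf fun n => ?_
  have hle := neg_integral_birkhoff_le_blockEntropy hf hμ (n + 1)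
  rw [integral_birkhoff hinv (integrable_of_continuous hf)] at hle
  rw [le_div_iff₀ (by positivity)]
  push_cast at hle
  linarith

end Variational

section Uniqueness

variable {𝒜 : Type} [TopologicalSpace 𝒜] [DiscreteTopology 𝒜] [MeasurableSpace 𝒜]
  [BorelSpace 𝒜] {μ ν : Measure (Omega 𝒜)}

/-- Outer regularity reduces to open sets, which are increasing unions of sets determined by
finitely many coordinates. -/
theorem absolutelyContinuous_of_word_preimage [Finite 𝒜] [IsFiniteMeasure μ]
    [IsFiniteMeasure ν]
    (h : ∀ ε > 0, ∃ δ > 0, ∀ (n : ℕ) (A : Finset (Fin n → 𝒜)),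
      μ.real (word n ⁻¹' A) ≤ δ → ν.real (word n ⁻¹' A) ≤ ε) : ν ≪ μ := by
  intro B hB
  refine le_antisymm (ENNReal.le_of_forall_pos_le_add fun ε hε _ => ?_) zero_le
  obtain ⟨δ, hδ, hμν⟩ := h ε hε
  obtain ⟨U, hBU, hU, hμU⟩ := B.exists_isOpen_le_add μ (ENNReal.ofReal_pos.mpr hδ).ne'
  rw [hB, zero_add] at hμU
  have hUnion := iUnion_word_preimage_cyl_subset hU
  have hsub (n : ℕ) : word n ⁻¹' {w | cyl w ⊆ U} ⊆ U := fun x hx => hx fun _ => rfl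
  have hle (n : ℕ) : ν (word n ⁻¹' {w | cyl w ⊆ U}) ≤ ε := by
    have hδ' : μ.real (word n ⁻¹' {w | cyl w ⊆ U}) ≤ δ :=
      ENNReal.toReal_le_of_le_ofReal hδ.le <|
        (measure_mono (hsub n)).trans hμU
    have hε' := hμν n (toFinite {w | cyl w ⊆ U}).toFinset (by rwa [Finite.coe_toFinset])
    rw [Finite.coe_toFinset] at hε'
    rw [← ENNReal.ofReal_coe_nnreal, ← ofReal_measureReal]
    exact ENNReal.ofReal_le_ofReal hε'
  calc ν B ≤ ν (⋃ n, word n ⁻¹' {w | cyl w ⊆ U}) := measure_mono (hBU.trans hUnion.ge)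
    _ = ⨆ n, ν (word n ⁻¹' {w | cyl w ⊆ U}) :=
        (monotone_word_preimage_cyl_subset U).measure_iUnion
    _ ≤ 0 + ε := by simpa using hle

variable [Fintype 𝒜] [IsProbabilityMeasure μ] [IsProbabilityMeasure ν] {f : Omega 𝒜 → ℝ} {C : ℝ}

/-- The relative entropy bound, tested against `μ` tilted by the factor `exp s` on `A`. -/
lemma measureReal_word_preimage_mul_le (hf : Continuous f) (hC : HasBoundedDistortion f C)
    (hμ : dualRuelle f μ = μ) (hν : MeasurePreserving shift ν ν)
    (heq : 0 ≤ KSentropy ν + ∫ x, f x ∂ν) {n : ℕ} (A : Finset (Fin n → 𝒜)) (s : ℝ) :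
    ν.real (word n ⁻¹' A) * s ≤ exp s * μ.real (word n ⁻¹' A) + C := by
  let t (w : Fin n → 𝒜) : ℝ := if w ∈ A then s else 0
  have hterm (w : Fin n → 𝒜) :
      (negMulLog (ν.real (cyl w)) + ν.real (cyl w) * log (μ.real (cyl w))) + ν.real (cyl w) * t w ≤
        (exp (t w) * μ.real (cyl w)) - ν.real (cyl w) := by
    have hpos := measureReal_cyl_pos hf hμ w
    have := negMulLog_add_mul_log_le (p := ν.real (cyl w)) measureReal_nonneg
      (mul_pos (exp_pos (t w)) hpos)
    rw [log_mul (exp_pos _).ne' hpos.ne', log_exp] at this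
    linarith
  have hexp (w : Fin n → 𝒜) : exp (t w) * μ.real (cyl w) ≤
      (if w ∈ A then exp s * μ.real (cyl w) else 0) + μ.real (cyl w) := by
    by_cases hw : w ∈ A <;> simp [t, hw, measureReal_nonneg]
  have hsum := Finset.sum_le_sum fun w (_ : w ∈ Finset.univ) =>
    (hterm w).trans (sub_le_sub_right (hexp w) _)
  have hlower := mul_KSentropy_add_integral_le hf hC hμ hν n
  have hnonneg : 0 ≤ n * (KSentropy ν + ∫ x, f x ∂ν) := by positivity
  simp only [Finset.sum_add_distrib, Finset.sum_sub_distrib, sum_measureReal_cyl] at hsum hlower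
  simp only [t, mul_ite, mul_zero, Finset.sum_ite_mem, Finset.univ_inter, ← Finset.sum_mul,
    ← Finset.mul_sum, ← measureReal_word_preimage] at hsum
  linarith

theorem absolutelyContinuous_of_KSentropy_add_integral_nonneg (hf : Continuous f)
    (hC : HasBoundedDistortion f C) (hμ : dualRuelle f μ = μ) (hν : MeasurePreserving shift ν ν)
    (heq : 0 ≤ KSentropy ν + ∫ x, f x ∂ν) : ν ≪ μ := by
  refine absolutelyContinuous_of_word_preimage fun ε hε => ?_
  have hC_nonneg : 0 ≤ C := by
    have := measureReal_word_preimage_mul_le hf hC hμ hν heq (∅ : Finset (Fin 0 → 𝒜)) 0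
    simpa using this
  let s := (C + 1) / ε
  have hs : 0 < s := by positivity
  refine ⟨exp (-s), exp_pos _, fun n A hA => ?_⟩
  have hbound : exp s * μ.real (word n ⁻¹' A) ≤ 1 := by
    calc exp s * μ.real (word n ⁻¹' A) ≤ exp s * exp (-s) := by gcongr
      _ = 1 := by rw [← exp_add, add_neg_cancel, exp_zero]
  have hεs : ε * s = C + 1 := mul_div_cancel₀ _ hε.ne'
  have := measureReal_word_preimage_mul_le hf hC hμ hν heq A s
  exact le_of_mul_le_mul_right (by linarith) hs

/-- Conditioning a conformal measure on an invariant set `B` keeps it conformal, hence makes it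
dominate `μ`, which leaves no room for `Bᶜ`. -/
theorem ergodic_of_dualRuelle_eq (hf : Continuous f) (hf1 : IsNormalized f)
    (hC : HasBoundedDistortion f C) (hμ : dualRuelle f μ = μ) : Ergodic shift μ := by
  have hinv := measurePreserving_shift_of_dualRuelle_eq hf.measurable hf1 hμ
  refine ⟨hinv, ⟨fun B hB hBinv => ?_⟩⟩
  rw [eventuallyConst_set']
  refine or_iff_not_imp_left.mpr fun hB0 => ?_
  have hB0 : μ B ≠ 0 := fun h => hB0 (ae_eq_empty.mpr h)
  have hcond : dualRuelle f (ProbabilityTheory.cond μ B) = ProbabilityTheory.cond μ B := by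
    rw [ProbabilityTheory.cond, dualRuelle_smul, dualRuelle_restrict hB, hμ, hBinv]
  have := ProbabilityTheory.cond_isProbabilityMeasure hB0
  have hac := absolutelyContinuous_of_KSentropy_add_integral_nonneg hf hC hcond hinv
    (KSentropy_add_integral_nonneg hf hμ hinv)
  refine ae_eq_univ.mpr (hac ?_)
  rw [ProbabilityTheory.cond_apply hB, inter_compl_self, measure_empty, mul_zero]

theorem eq_of_KSentropy_add_integral_nonneg (hf : Continuous f) (hf1 : IsNormalized f)
    (hC : HasBoundedDistortion f C) (hμ : dualRuelle f μ = μ) (hν : MeasurePreserving shift ν ν)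
    (heq : 0 ≤ KSentropy ν + ∫ x, f x ∂ν) : ν = μ :=
  (ergodic_of_dualRuelle_eq hf hf1 hC hμ).eq_of_absolutelyContinuous hν
    (absolutelyContinuous_of_KSentropy_add_integral_nonneg hf hC hμ hν heq)

theorem dualRuelle_eq_unique (hf : Continuous f) (hf1 : IsNormalized f)
    (hC : HasBoundedDistortion f C) (hμ : dualRuelle f μ = μ) (hν : dualRuelle f ν = ν) :
    ν = μ := by
  have hinv := measurePreserving_shift_of_dualRuelle_eq hf.measurable hf1 hν
  exact eq_of_KSentropy_add_integral_nonneg hf hf1 hC hμ hinv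
    (KSentropy_add_integral_nonneg hf hν hinv)

end Uniqueness

section Equilibrium

lemma integral_neg_of_forall_neg {X : Type*} [MeasurableSpace X] {μ : Measure X} [NeZero μ]
    {f : X → ℝ} (hf : Integrable f μ) (hneg : ∀ x, f x < 0) : ∫ x, f x ∂μ < 0 := by
  rw [← neg_pos, ← integral_neg]
  refine (integral_pos_iff_support_of_nonneg (fun x => (neg_pos.mpr (hneg x)).le) hf.neg).mpr ?_
  have hsupp : Function.support (-f) = univ :=
    eq_univ_of_forall fun x => neg_ne_zero.mpr (hneg x).ne
  exact hsupp ▸ Measure.measure_univ_pos.mpr (NeZero.ne μ)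

variable {𝒜 : Type} [Fintype 𝒜] [TopologicalSpace 𝒜] [DiscreteTopology 𝒜] [MeasurableSpace 𝒜]
  [BorelSpace 𝒜] {f : Omega 𝒜 → ℝ} {C : ℝ} {μ : Measure (Omega 𝒜)} [IsProbabilityMeasure μ]

theorem KSentropy_eq_neg_integral (hf : Continuous f) (hC : HasBoundedDistortion f C)
    (hμ : dualRuelle f μ = μ) (hinv : MeasurePreserving shift μ μ) :
    KSentropy μ = -∫ x, f x ∂μ :=
  eq_neg_of_add_eq_zero_left <|
    (KSentropy_add_integral_nonpos hf hC hμ hinv).antisymm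
      (KSentropy_add_integral_nonneg hf hμ hinv)

theorem pressure_eq_zero (hf : Continuous f) (hC : HasBoundedDistortion f C)
    (hμ : dualRuelle f μ = μ) (hinv : MeasurePreserving shift μ μ) : pressure f = 0 := by
  refine IsGreatest.csSup_eq ⟨⟨μ, inferInstance, hinv.map_eq, ?_⟩, ?_⟩
  · rw [KSentropy_eq_neg_integral hf hC hμ hinv, neg_add_cancel]
  · rintro _ ⟨ν, hν, hνinv, rfl⟩
    exact KSentropy_add_integral_nonpos hf hC hμ ⟨measurable_shift, hνinv⟩

end Equilibrium

theorem statement17_general {𝒜 : Type} [Fintype 𝒜] [TopologicalSpace 𝒜] [DiscreteTopology 𝒜]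
    [MeasurableSpace 𝒜] [BorelSpace 𝒜] (hcard : 2 ≤ Fintype.card 𝒜)
    (J : Omega 𝒜 → ℝ) (hJ : IsGFunction J) {C : ℝ}
    (hC : HasBoundedDistortion (fun z => Real.log (J z)) C) :
    ∃ μ : Measure (Omega 𝒜),
      IsGMeasure J μ ∧
      (∀ ν : Measure (Omega 𝒜), IsGMeasure J ν → ν = μ) ∧
      Measure.map shift μ = μ ∧
      (∀ U : Set (Omega 𝒜), IsOpen U → U.Nonempty → 0 < μ U) ∧
      pressure (fun z => Real.log (J z)) = 0 ∧
      IsEquilibrium (fun z => Real.log (J z)) μ ∧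
      (∀ ν : Measure (Omega 𝒜), IsEquilibrium (fun z => Real.log (J z)) ν → ν = μ) ∧
      KSentropy μ = -∫ z, Real.log (J z) ∂μ ∧
      0 < KSentropy μ := by
  have hf := hJ.continuous_log
  have hf1 := hJ.isNormalized_log
  have : Nontrivial 𝒜 := Fintype.one_lt_card_iff_nontrivial.mp hcard
  obtain ⟨μ, hprob, hμ⟩ := exists_dualRuelle_eq hf hf1
  have hinv := measurePreserving_shift_of_dualRuelle_eq hf.measurable hf1 hμ
  have hentropy := KSentropy_eq_neg_integral hf hC hμ hinv
  have hpressure := pressure_eq_zero hf hC hμ hinv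
  refine ⟨μ, (isGMeasure_iff hJ).mpr ⟨hprob, hμ⟩, fun ν hν => ?_, hinv.map_eq,
    fun U => measure_pos_of_isOpen hf hμ, hpressure, ⟨hprob, hinv.map_eq, ?_⟩, ?_, hentropy,
    hentropy ▸ neg_pos.mpr (integral_neg_of_forall_neg (integrable_of_continuous hf) hf1.neg)⟩
  · obtain ⟨hνprob, hν⟩ := (isGMeasure_iff hJ).mp hν
    exact dualRuelle_eq_unique hf hf1 hC hμ hν
  · rw [hentropy, hpressure, neg_add_cancel]
  · rintro ν ⟨hνprob, hνinv, hνeq⟩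
    exact eq_of_KSentropy_add_integral_nonneg hf hf1 hC hμ ⟨measurable_shift, hνinv⟩
      (hνeq.trans hpressure).ge

/-- Ruelle–Perron–Frobenius / Walters' theorem for the Walters class.
If `log J` is a `g`-function in the Walters class, then there is exactly one Borel probability
`μ` with `L_{log J}^* μ = μ`; it is shift-invariant and fully supported, `P(log J) = 0`, `μ` is
the unique equilibrium state of `log J`, and `h_μ(σ) = −∫ log J dμ > 0`. -/
theorem statement17 {𝒜 : Type} [Fintype 𝒜] [TopologicalSpace 𝒜] [DiscreteTopology 𝒜]
    [MeasurableSpace 𝒜] [BorelSpace 𝒜] (hcard : 2 ≤ Fintype.card 𝒜)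
    (J : Omega 𝒜 → ℝ) (hJ : IsGFunction J)
    (hW : WaltersClass (fun z => Real.log (J z))) :
    ∃ μ : Measure (Omega 𝒜),
      IsGMeasure J μ ∧
      (∀ ν : Measure (Omega 𝒜), IsGMeasure J ν → ν = μ) ∧
      Measure.map shift μ = μ ∧
      (∀ U : Set (Omega 𝒜), IsOpen U → U.Nonempty → 0 < μ U) ∧
      pressure (fun z => Real.log (J z)) = 0 ∧
      IsEquilibrium (fun z => Real.log (J z)) μ ∧
      (∀ ν : Measure (Omega 𝒜), IsEquilibrium (fun z => Real.log (J z)) ν → ν = μ) ∧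
      KSentropy μ = -∫ z, Real.log (J z) ∂μ ∧
      0 < KSentropy μ := by
  obtain ⟨C, hC⟩ := hW.exists_hasBoundedDistortion
  exact statement17_general hcard J hJ hC

end GS
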